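/- Let P ⊆ ℝⁿ be a Delone set of finite local complexity and let ψ : P → ℝᵐ be a function such that for every h ∈ P − P, the difference function Δ_h ψ : P ∩ (P − h) → ℝᵐ, Δ_h ψ(x) = ψ(x + h) − ψ(x), is strongly P-equivariant. Then there exists a smooth (C^∞) function φ : ℝⁿ → ℝᵐ whose restriction to P equals ψ and whose derivative map dφ is strongly P-equivariant. -/

import Mathlib

open Metric Set

noncomputable section

/-- Euclidean space ℝⁿ. -/
abbrev Euc (n : ℕ) := EuclideanSpace ℝ (Fin n)

/-- The translate `P - x = {p - x : p ∈ P}`. -/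
def shiftSet {n : ℕ} (P : Set (Euc n)) (x : Euc n) : Set (Euc n) :=
  (fun p => p - x) '' P

/-- The `r`-patch of `P` around `x`: `B_r[P - x] = B(0,r) ∩ (P - x)`. -/
def patch {n : ℕ} (P : Set (Euc n)) (r : ℝ) (x : Euc n) : Set (Euc n) :=
  ball (0 : Euc n) r ∩ shiftSet P x

/-- `P` is uniformly discrete: there is a positive minimal distance between points. -/
def UnifDiscrete {n : ℕ} (P : Set (Euc n)) : Prop :=
  ∃ δ > 0, ∀ p ∈ P, ∀ q ∈ P, p ≠ q → δ ≤ ‖p - q‖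

/-- `P` is relatively dense: every ball of radius `R` contains a point of `P`. -/
def RelDense {n : ℕ} (P : Set (Euc n)) : Prop :=
  ∃ R > 0, ∀ x : Euc n, ∃ p ∈ P, ‖p - x‖ < R

/-- `P` has finite local complexity: for each `r > 0`, only finitely many `r`-patches
around points of `P`. -/
def FLC {n : ℕ} (P : Set (Euc n)) : Prop :=
  ∀ r > 0, {s : Set (Euc n) | ∃ x ∈ P, s = patch P r x}.Finite

/-- `f` is `P`-equivariant with range `R`. -/
def EquivRange {n : ℕ} {F : Type*} (P : Set (Euc n)) (R : ℝ) (f : Euc n → F) : Prop :=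
  ∀ x y : Euc n, patch P R x = patch P R y → f x = f y

/-- `f` is strongly `P`-equivariant: `P`-equivariant with some finite range `R > 0`. -/
def StrongEquiv {n : ℕ} {F : Type*} (P : Set (Euc n)) (f : Euc n → F) : Prop :=
  ∃ R > 0, EquivRange P R f

/-- `f`, viewed as a function on the subset `Q`, is `P`-equivariant with range `R`. -/
def EquivRangeOn {n : ℕ} {F : Type*} (P Q : Set (Euc n)) (R : ℝ) (f : Euc n → F) : Prop :=
  ∀ x ∈ Q, ∀ y ∈ Q, patch P R x = patch P R y → f x = f y

/-- `f`, viewed as a function on the subset `Q`, is strongly `P`-equivariant. -/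
def StrongEquivOn {n : ℕ} {F : Type*} (P Q : Set (Euc n)) (f : Euc n → F) : Prop :=
  ∃ R > 0, EquivRangeOn P Q R f

/-- `Q` is locally derivable from `P`. -/
def LocallyDerivable {n : ℕ} (P Q : Set (Euc n)) : Prop :=
  ∃ R > 0, ∀ x y : Euc n, patch P R x = patch P R y →
    ({0} : Set (Euc n)) ∩ shiftSet Q x = ({0} : Set (Euc n)) ∩ shiftSet Q y

/-- Hypothesis (H): for every `r > 0` there is `r' > 0` such that for all `x`,
`B(φ(x), r) ∩ φ(P) ⊆ φ(B(x, r') ∩ P)`. -/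
def HypoH {n : ℕ} (P : Set (Euc n)) (φ : Euc n → Euc n) : Prop :=
  ∀ r > 0, ∃ r' > 0, ∀ x : Euc n, ball (φ x) r ∩ (φ '' P) ⊆ φ '' (ball x r' ∩ P)

/-- The pattern metric `D` on closed subsets of ℝⁿ. -/
def patternDist {n : ℕ} (A B : Set (Euc n)) : ℝ :=
  sInf {ε : ℝ | 0 < ε ∧ Metric.hausdorffDist
    ((ball (0 : Euc n) (1 / ε) ∩ A) ∪ sphere (0 : Euc n) (1 / ε))
    ((ball (0 : Euc n) (1 / ε) ∩ B) ∪ sphere (0 : Euc n) (1 / ε)) ≤ ε}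

/-- A continuous `f : ℝⁿ → ℝⁿ` is weakly `P`-equivariant if it is uniformly approximated
by strongly `P`-equivariant continuous functions. -/
def WeakEquiv {n : ℕ} (P : Set (Euc n)) (f : Euc n → Euc n) : Prop :=
  ∀ ε > 0, ∃ g : Euc n → Euc n, Continuous g ∧ StrongEquiv P g ∧ ∀ x : Euc n, ‖f x - g x‖ < ε

/-- `P` is aperiodic: the only translation fixing `P` is `0`. -/
def IsAperiodicSet {n : ℕ} (P : Set (Euc n)) : Prop :=
  ∀ x : Euc n, shiftSet P x = P → x = 0


/-! The weights of an interpolating partition of unity can be chosen as a function of the patch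
around the evaluation point. With such weights, the weighted mean `φ` of the values of `ψ` satisfies
`φ z - ψ q = ∑ w p z • (ψ p - ψ q)` for any `q ∈ P` near `z`, a sum of short differences of `ψ`. By
finite local complexity only finitely many displacements occur in it, so all these differences
share a common range. Hence `φ z - ψ q` is determined by the patch around `z`; subtracting two such
expressions with the same `q` shows that so are the small increments of `φ`, and with them `dφ`. -/

section Equivariance

variable {n : ℕ} {F : Type*} {P Q : Set (Euc n)} {r s : ℝ} {x y u a : Euc n}

lemma mem_shiftSet_iff : x ∈ shiftSet P a ↔ x + a ∈ P := by
  simp [shiftSet, sub_eq_iff_eq_add]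

lemma mem_patch_iff : u ∈ patch P r x ↔ ‖u‖ < r ∧ x + u ∈ P := by
  simp only [patch, mem_inter_iff, mem_ball_zero_iff, mem_shiftSet_iff, add_comm u x]

lemma add_mem_iff_of_patch_eq (h : patch P r x = patch P r y) (hu : ‖u‖ < r) :
    x + u ∈ P ↔ y + u ∈ P := by
  simpa [mem_patch_iff, hu] using Set.ext_iff.1 h u

lemma patch_add_eq_patch_add (h : patch P s x = patch P s y) (hrs : r + ‖a‖ ≤ s) :
    patch P r (x + a) = patch P r (y + a) := by
  ext u
  simp only [mem_patch_iff, add_assoc]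
  refine and_congr_right fun hu => add_mem_iff_of_patch_eq h ?_
  linarith [norm_add_le a u]

lemma patch_eq_patch_of_le (h : patch P s x = patch P s y) (hrs : r ≤ s) :
    patch P r x = patch P r y := by
  simpa using patch_add_eq_patch_add (a := 0) h (by simpa using hrs)

lemma EquivRangeOn.comp_add_right {f : Euc n → F} (hf : EquivRangeOn P Q r f)
    (hrs : r + ‖a‖ ≤ s) : EquivRangeOn P (shiftSet Q a) s fun x => f (x + a) :=
  fun _ hx _ hy h =>
    hf _ (mem_shiftSet_iff.1 hx) _ (mem_shiftSet_iff.1 hy) (patch_add_eq_patch_add h hrs)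

lemma EquivRangeOn.mono {f : Euc n → F} (hf : EquivRangeOn P Q r f) (hrs : r ≤ s) :
    EquivRangeOn P Q s f :=
  fun x hx y hy h => hf x hx y hy (patch_eq_patch_of_le h hrs)

lemma equivRange_fderiv {E : Type*} [NormedAddCommGroup E] [NormedSpace ℝ E] {f : Euc n → E}
    (hr : 0 < r) (hf : ∀ v, ‖v‖ < r → EquivRange P s fun x => f (x + v) - f x) :
    EquivRange P s (fderiv ℝ f) := by
  intro x y hxy
  have hloc : (fun v => f (x + v)) =ᶠ[nhds 0] fun v => f (y + v) + (f x - f y) := by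
    filter_upwards [ball_mem_nhds (0 : Euc n) hr] with v hv
    have hincr : f (x + v) - f x = f (y + v) - f y := hf v (mem_ball_zero_iff.1 hv) x y hxy
    rw [sub_eq_iff_eq_add.1 hincr, sub_add_eq_add_sub, add_sub_assoc]
  simpa [fderiv_add_const, fderiv_comp_add_left] using hloc.fderiv_eq (𝕜 := ℝ)

/-- Comparing `φ` with `ψ` at one and the same nearby point of `P` eliminates `ψ` from the
increments of `φ`. -/
lemma equivRange_increment [AddCommGroup F] {φ ψ : Euc n → F} {R : ℝ} {v : Euc n}
    (hdense : ∀ x, ∃ p ∈ P, ‖p - x‖ < R)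
    (hφ : ∀ a, ‖a‖ < R + r → EquivRangeOn P (shiftSet P a) s fun z => φ z - ψ (z + a))
    (hv : ‖v‖ < r) (hRs : R ≤ s) : EquivRange P (s + r) fun x => φ (x + v) - φ x := by
  intro x y hxy
  obtain ⟨q, hq, hqx⟩ := hdense x
  obtain ⟨a, rfl⟩ : ∃ a, q = x + a := ⟨q - x, by simp⟩
  rw [add_sub_cancel_left] at hqx
  have hr : 0 < r := (norm_nonneg v).trans_lt hv
  have hqy : y + a ∈ P := (add_mem_iff_of_patch_eq hxy (by linarith)).1 hq
  have hbase := hφ a (by linarith) x (mem_shiftSet_iff.2 hq) y (mem_shiftSet_iff.2 hqy)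
    (patch_eq_patch_of_le hxy (by linarith))
  have hcancel : ∀ z : Euc n, z + v + (a - v) = z + a := fun z => by abel
  have hmoved := hφ (a - v) (by linarith [norm_sub_le a v])
    (x + v) (by rwa [mem_shiftSet_iff, hcancel]) (y + v) (by rwa [mem_shiftSet_iff, hcancel])
    (patch_add_eq_patch_add hxy (by linarith))
  simp only [hcancel] at hmoved
  simpa using congrArg₂ (· - ·) hmoved hbase

end Equivariance

section Finiteness

variable {n : ℕ} {F : Type*} {P : Set (Euc n)}

lemma UnifDiscrete.finite_inter (hP : UnifDiscrete P) {K : Set (Euc n)}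
    (hK : Bornology.IsBounded K) : (K ∩ P).Finite := by
  obtain ⟨δ, hδ, hsep⟩ := hP
  have hpw : P.Pairwise fun p q => δ ≤ dist p q := fun p hp q hq hne => by
    simpa only [dist_eq_norm] using hsep p hp q hq hne
  have hdiscrete : DiscreteTopology P :=
    DiscreteTopology.of_forall_le_dist hδ fun p q hne =>
      hpw p.2 q.2 (Subtype.coe_injective.ne hne)
  exact Metric.finite_isBounded_inter_isClosed ⟨hdiscrete⟩ hK (isClosed_of_pairwise_le_dist hδ hpw)

lemma UnifDiscrete.finite_patch (hP : UnifDiscrete P) (r : ℝ) (x : Euc n) :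
    (patch P r x).Finite := by
  refine .of_injOn (f := (x + ·)) (fun u hu => ?_) (add_right_injective x).injOn
    (hP.finite_inter (isBounded_ball (x := x) (r := r)))
  rw [mem_patch_iff] at hu
  exact ⟨by simpa using hu.1, hu.2⟩

lemma FLC.finite_biUnion_patch (hF : FLC P) (hP : UnifDiscrete P) {r : ℝ} (hr : 0 < r) :
    (⋃ x ∈ P, patch P r x).Finite := by
  refine ((hF r hr).sUnion ?_).subset (iUnion₂_subset fun x hx =>
    subset_sUnion_of_mem ⟨x, hx, rfl⟩)
  rintro _ ⟨x, -, rfl⟩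
  exact hP.finite_patch r x

lemma FLC.exists_uniform_range (hF : FLC P) (hP : UnifDiscrete P) {f : Euc n → Euc n → F}
    (hf : ∀ h : Euc n, (∃ p ∈ P, ∃ q ∈ P, h = p - q) →
      StrongEquivOn P (P ∩ shiftSet P h) (f h)) {L : ℝ} (hL : 0 < L) :
    ∃ M > 0, ∀ h : Euc n, ‖h‖ < L → EquivRangeOn P (P ∩ shiftSet P h) M (f h) := by
  choose! R _ hR using hf
  obtain ⟨M, hM⟩ := ((hF.finite_biUnion_patch hP hL).image R).bddAbove
  refine ⟨max M 1, by positivity, fun h hh x hx y hy hxy => ?_⟩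
  have hxh : x + h ∈ P := mem_shiftSet_iff.1 hx.2
  have hle : R h ≤ max M 1 :=
    le_max_of_le_left (hM ⟨h, mem_biUnion hx.1 (mem_patch_iff.2 ⟨hh, hxh⟩), rfl⟩)
  exact (hR h ⟨x + h, hxh, x, hx.1, by simp⟩).mono hle x hx y hy hxy

end Finiteness

section LocalSum

lemma finsum_mem_eq_single {α M : Type*} [AddCommMonoid M] {s : Set α} {f : α → M} {a : α}
    (ha : a ∈ s) (hf : ∀ i ∈ s, i ≠ a → f i = 0) : ∑ᶠ i ∈ s, f i = f a := by
  rw [← finsum_mem_singleton (f := f) (a := a)]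
  refine finsum_mem_inter_support_eq' f _ _ fun i hi => ⟨fun his => ?_, ?_⟩
  · exact of_not_not fun hia => hi (hf i his hia)
  · rintro rfl
    exact ha

variable {n : ℕ} {E : Type*} {P : Set (Euc n)} {T : ℝ}

lemma finsum_mem_eq_finsum_mem_patch [AddCommMonoid E] {z : Euc n} {f : Euc n → E}
    (hf : ∀ p, T ≤ ‖p - z‖ → f p = 0) :
    ∑ᶠ p ∈ P, f p = ∑ᶠ u ∈ patch P T z, f (z + u) := by
  rw [← finsum_mem_image (f := f) (g := (z + ·)) (add_right_injective z).injOn]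
  refine finsum_mem_inter_support_eq' f _ _ fun p hp => ⟨fun hpP => ?_, ?_⟩
  · have hpz : ‖p - z‖ < T := not_le.1 fun h => hp (hf p h)
    exact ⟨p - z, mem_patch_iff.2 ⟨hpz, by simpa using hpP⟩, by simp⟩
  · rintro ⟨u, hu, rfl⟩
    exact (mem_patch_iff.1 hu).2

lemma UnifDiscrete.contDiff_finsum_mem [NormedAddCommGroup E] [NormedSpace ℝ E]
    (hP : UnifDiscrete P) {k : WithTop ℕ∞} {f : Euc n → Euc n → E}
    (hf : ∀ p ∈ P, ContDiff ℝ k (f p)) (hT : ∀ p z, T ≤ ‖p - z‖ → f p z = 0) :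
    ContDiff ℝ k fun z => ∑ᶠ p ∈ P, f p z := by
  have hloc : LocallyFinite fun p : P => Function.support (f p) := by
    intro x
    refine ⟨ball x 1, ball_mem_nhds x one_pos,
      .of_finite_image ((hP.finite_inter (isBounded_ball (x := x) (r := T + 1))).subset ?_)
        Subtype.coe_injective.injOn⟩
    rintro _ ⟨p, ⟨z, hz, hzx⟩, rfl⟩
    have hpz : ‖(p : Euc n) - z‖ < T := not_le.1 fun h => hz (hT p z h)
    rw [← dist_eq_norm] at hpz
    refine ⟨mem_ball.2 ?_, p.2⟩
    linarith [dist_triangle (p : Euc n) z x, mem_ball.1 hzx]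
  simp only [← finsum_set_coe_eq_finsum_mem]
  exact contMDiff_iff_contDiff.1 (contMDiff_finsum (fun p => (hf p p.2).contMDiff) hloc)

end LocalSum

/-- A smooth, equivariant partition of unity indexed by `P` whose member `w p` is supported within
distance `T` of `p` and vanishes at the other points of `P`. It is a device for extending functions
from `P` to `ℝⁿ`. Nonnegativity is not required, and the range of equivariance is the same `T`. -/
structure IsEquivariantPartition {n : ℕ} (P : Set (Euc n)) (T : ℝ) (w : Euc n → Euc n → ℝ) :
    Prop where
  contDiff : ∀ p, ContDiff ℝ (⊤ : ℕ∞) (w p)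
  eq_zero_of_le : ∀ p z, T ≤ ‖p - z‖ → w p z = 0
  sum_eq_one : ∀ z, ∑ᶠ p ∈ P, w p z = 1
  eq_zero_of_ne : ∀ p ∈ P, ∀ q ∈ P, p ≠ q → w p q = 0
  equivRange : ∀ u, EquivRange P T fun z => w (z + u) z

/-- The extension `z ↦ ∑ w p z • ψ p` of `ψ` from `P` to all of `ℝⁿ` with weights `w`. -/
def interpolate {n : ℕ} {E : Type*} [AddCommMonoid E] [SMul ℝ E] (P : Set (Euc n))
    (w : Euc n → Euc n → ℝ) (ψ : Euc n → E) (z : Euc n) : E :=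
  ∑ᶠ p ∈ P, w p z • ψ p

namespace IsEquivariantPartition

variable {n : ℕ} {E : Type*} {P : Set (Euc n)} {T : ℝ} {w : Euc n → Euc n → ℝ}

lemma apply_self (hw : IsEquivariantPartition P T w) {q : Euc n} (hq : q ∈ P) : w q q = 1 := by
  rw [← hw.sum_eq_one q, finsum_mem_eq_single hq fun p hp hpq => hw.eq_zero_of_ne p hp q hq hpq]

lemma interpolate_apply_of_mem [AddCommMonoid E] [Module ℝ E] (hw : IsEquivariantPartition P T w)
    (ψ : Euc n → E) {q : Euc n} (hq : q ∈ P) : interpolate P w ψ q = ψ q := by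
  rw [interpolate, finsum_mem_eq_single hq fun p hp hpq => ?_, hw.apply_self hq, one_smul]
  rw [hw.eq_zero_of_ne p hp q hq hpq, zero_smul]

lemma contDiff_interpolate [NormedAddCommGroup E] [NormedSpace ℝ E]
    (hw : IsEquivariantPartition P T w) (hP : UnifDiscrete P) (ψ : Euc n → E) :
    ContDiff ℝ (⊤ : ℕ∞) (interpolate P w ψ) :=
  hP.contDiff_finsum_mem (fun p _ => (hw.contDiff p).smul contDiff_const)
    fun p z h => by rw [hw.eq_zero_of_le p z h, zero_smul]

lemma interpolate_sub_eq_finsum_mem_patch [AddCommGroup E] [Module ℝ E]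
    (hw : IsEquivariantPartition P T w) (hP : UnifDiscrete P) (ψ : Euc n → E) (c : E)
    (z : Euc n) :
    interpolate P w ψ z - c = ∑ᶠ u ∈ patch P T z, w (z + u) z • (ψ (z + u) - c) := by
  have hfin := hP.finite_patch T z
  have hsum : ∑ᶠ u ∈ patch P T z, w (z + u) z = 1 := by
    rw [← finsum_mem_eq_finsum_mem_patch (hw.eq_zero_of_le · z), hw.sum_eq_one]
  have hmean : interpolate P w ψ z = ∑ᶠ u ∈ patch P T z, w (z + u) z • ψ (z + u) :=
    finsum_mem_eq_finsum_mem_patch fun p h => by rw [hw.eq_zero_of_le p z h, zero_smul]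
  have hconst : ∑ᶠ u ∈ patch P T z, w (z + u) z • c = c := by
    have hmap := (LinearMap.toSpanSingleton ℝ E c).toAddMonoidHom.map_finsum_mem
      (fun u => w (z + u) z) hfin
    simpa [hsum] using hmap.symm
  simp only [smul_sub]
  rw [finsum_mem_sub_distrib _ _ hfin, hmean, hconst]

lemma equivRangeOn_interpolate_sub [AddCommGroup E] [Module ℝ E]
    (hw : IsEquivariantPartition P T w) (hP : UnifDiscrete P) {ψ : Euc n → E} {L M S : ℝ}
    {a : Euc n}
    (hψ : ∀ h, ‖h‖ < L → EquivRangeOn P (P ∩ shiftSet P h) M fun x => ψ (x + h) - ψ x)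
    (hL : T + ‖a‖ ≤ L) (hT : T ≤ S) (hM : M + ‖a‖ ≤ S) :
    EquivRangeOn P (shiftSet P a) S fun z => interpolate P w ψ z - ψ (z + a) := by
  intro x hx y hy hxy
  rw [mem_shiftSet_iff] at hx hy
  have hT_patch : patch P T x = patch P T y := patch_eq_patch_of_le hxy hT
  simp only [hw.interpolate_sub_eq_finsum_mem_patch hP, ← hT_patch]
  refine finsum_mem_congr rfl fun u hu => ?_
  obtain ⟨hu_norm, hxu⟩ := mem_patch_iff.1 hu
  have hyu : y + u ∈ P := (mem_patch_iff.1 (hT_patch ▸ hu)).2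
  have hcancel : ∀ z : Euc n, z + a + (u - a) = z + u := fun z => by abel
  have hdiff := (hψ (u - a) (by linarith [norm_sub_le u a])).comp_add_right hM
    x (by simp [mem_shiftSet_iff, hcancel, hx, hxu])
    y (by simp [mem_shiftSet_iff, hcancel, hy, hyu]) hxy
  simp only [hcancel] at hdiff
  exact congrArg₂ (· • ·) (hw.equivRange u x y hT_patch) hdiff

end IsEquivariantPartition

/-- The number of points of `P` around `z`, counted with the profile `g` of their position relative
to `z`; dividing by it normalizes the translates of `g`. -/
def density {n : ℕ} (P : Set (Euc n)) (g : Euc n → ℝ) (z : Euc n) : ℝ :=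
  ∑ᶠ p ∈ P, g (p - z)

section Density

variable {n : ℕ} {P : Set (Euc n)} {g : Euc n → ℝ} {T : ℝ}

lemma density_eq_finsum_mem_patch (hg : ∀ u, T ≤ ‖u‖ → g u = 0) (z : Euc n) :
    density P g z = ∑ᶠ u ∈ patch P T z, g u := by
  simpa only [density, add_sub_cancel_left] using
    finsum_mem_eq_finsum_mem_patch (P := P) fun p => hg (p - z)

lemma equivRange_density (hg : ∀ u, T ≤ ‖u‖ → g u = 0) : EquivRange P T (density P g) :=
  fun x y h => by rw [density_eq_finsum_mem_patch hg, density_eq_finsum_mem_patch hg, h]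

lemma UnifDiscrete.contDiff_density (hP : UnifDiscrete P) (hg : ∀ u, T ≤ ‖u‖ → g u = 0)
    {k : WithTop ℕ∞} (hgk : ContDiff ℝ k g) : ContDiff ℝ k (density P g) :=
  hP.contDiff_finsum_mem (fun _ _ => hgk.comp (contDiff_const.sub contDiff_id))
    fun p z => hg (p - z)

lemma UnifDiscrete.density_pos (hP : UnifDiscrete P) (hg : ∀ u, T ≤ ‖u‖ → g u = 0)
    (hg0 : ∀ u, 0 ≤ g u) {p z : Euc n} (hp : p ∈ P) (hpz : 0 < g (p - z)) :
    0 < density P g z := by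
  have hpT : p - z ∈ patch P T z :=
    mem_patch_iff.2 ⟨not_le.1 fun h => hpz.ne' (hg _ h), by simpa using hp⟩
  rw [density_eq_finsum_mem_patch hg]
  exact finsum_cond_pos (fun u _ => hg0 u) ⟨p - z, hpT, hpz⟩
    ((hP.finite_patch T z).inter_of_right _)

lemma density_apply_of_mem {q : Euc n} (hq : q ∈ P) (hsep : ∀ p ∈ P, p ≠ q → g (p - q) = 0) :
    density P g q = g 0 := by
  rw [density, finsum_mem_eq_single hq hsep, sub_self]

end Density

/-- The weights `β (p - z)`, which force interpolation at `P`, completed to total weight `1` by a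
multiple of the normalized weights `ρ (p - z)`. -/
def bumpWeight {n : ℕ} (P : Set (Euc n)) (β ρ : Euc n → ℝ) (p z : Euc n) : ℝ :=
  β (p - z) + (1 - density P β z) / density P ρ z * ρ (p - z)

section Existence

variable {n : ℕ} {P : Set (Euc n)}

lemma finsum_mem_bumpWeight (hP : UnifDiscrete P) {β ρ : Euc n → ℝ} {T : ℝ}
    (hβ : ∀ u, T ≤ ‖u‖ → β u = 0) (hρ : ∀ u, T ≤ ‖u‖ → ρ u = 0) {z : Euc n}
    (hz : density P ρ z ≠ 0) : ∑ᶠ p ∈ P, bumpWeight P β ρ p z = 1 := by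
  have hfin := hP.finite_patch T z
  calc ∑ᶠ p ∈ P, bumpWeight P β ρ p z
      = ∑ᶠ u ∈ patch P T z, (β u + (1 - density P β z) / density P ρ z * ρ u) := by
        rw [finsum_mem_eq_finsum_mem_patch (T := T) (z := z) fun p h => by
          simp [bumpWeight, hβ _ h, hρ _ h]]
        simp only [bumpWeight, add_sub_cancel_left]
    _ = density P β z + (1 - density P β z) / density P ρ z * density P ρ z := by
        rw [finsum_mem_add_distrib hfin, ← mul_finsum_mem' _ _ hfin,
          ← density_eq_finsum_mem_patch hβ, ← density_eq_finsum_mem_patch hρ]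
    _ = 1 := by rw [div_mul_cancel₀ _ hz, add_sub_cancel]

lemma isEquivariantPartition_bumpWeight (hP : UnifDiscrete P) {β ρ : Euc n → ℝ} {T : ℝ}
    (hβ : ∀ u, T ≤ ‖u‖ → β u = 0) (hρ : ∀ u, T ≤ ‖u‖ → ρ u = 0)
    (hβ_smooth : ContDiff ℝ (⊤ : ℕ∞) β) (hρ_smooth : ContDiff ℝ (⊤ : ℕ∞) ρ)
    (hβ_zero : β 0 = 1) (hsep : ∀ p ∈ P, ∀ q ∈ P, p ≠ q → β (p - q) = 0)
    (hdense : ∀ z, density P ρ z ≠ 0) :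
    IsEquivariantPartition P T (bumpWeight P β ρ) where
  contDiff p := by
    have hsub : ContDiff ℝ (⊤ : ℕ∞) fun z : Euc n => p - z := contDiff_const.sub contDiff_id
    exact (hβ_smooth.comp hsub).add (((contDiff_const.sub (hP.contDiff_density hβ hβ_smooth)).div
      (hP.contDiff_density hρ hρ_smooth) hdense).mul (hρ_smooth.comp hsub))
  eq_zero_of_le p z h := by simp [bumpWeight, hβ _ h, hρ _ h]
  sum_eq_one z := finsum_mem_bumpWeight hP hβ hρ (hdense z)
  eq_zero_of_ne p hp q hq hpq := by
    simp [bumpWeight, hsep p hp q hq hpq, density_apply_of_mem hq (hsep · · q hq), hβ_zero]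
  equivRange u x y h := by
    simp [bumpWeight, equivRange_density hβ x y h, equivRange_density hρ x y h]

lemma UnifDiscrete.exists_isEquivariantPartition (hP : UnifDiscrete P) (hD : RelDense P) :
    ∃ T > 0, ∃ w, IsEquivariantPartition P T w := by
  have ⟨δ, hδ, hsep⟩ := hP
  obtain ⟨R, hR, hdense⟩ := hD
  let β : ContDiffBump (0 : Euc n) := ⟨δ / 2, δ, by linarith, by linarith⟩
  let ρ : ContDiffBump (0 : Euc n) := ⟨R / 2, R, by linarith, by linarith⟩
  have hβ : ∀ u, δ ≤ ‖u‖ → β u = 0 := fun u hu => β.zero_of_le_dist (by simpa using hu)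
  have hρ : ∀ u, R ≤ ‖u‖ → ρ u = 0 := fun u hu => ρ.zero_of_le_dist (by simpa using hu)
  refine ⟨max δ R, by positivity, bumpWeight P β ρ, isEquivariantPartition_bumpWeight hP
    (fun u hu => hβ u (le_of_max_le_left hu)) (fun u hu => hρ u (le_of_max_le_right hu))
    β.contDiff ρ.contDiff (β.one_of_mem_closedBall (by simpa using β.rIn_pos.le))
    (fun p hp q hq hpq => hβ _ (hsep p hp q hq hpq)) fun z => ?_⟩
  obtain ⟨p, hp, hpz⟩ := hdense z
  exact (hP.density_pos hρ (fun _ => ρ.nonneg) hp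
    (ρ.pos_of_mem_ball (mem_ball_zero_iff.2 hpz))).ne'

end Existence

theorem stmt3_general {n : ℕ} {E : Type*} [NormedAddCommGroup E] [NormedSpace ℝ E]
    (P : Set (Euc n)) (hUD : UnifDiscrete P) (hRD : RelDense P) (hFLC : FLC P) (ψ : Euc n → E)
    (hΔ : ∀ h : Euc n, (∃ p ∈ P, ∃ q ∈ P, h = p - q) →
      StrongEquivOn P (P ∩ shiftSet P h) (fun x => ψ (x + h) - ψ x)) :
    ∃ φ : Euc n → E, ContDiff ℝ (⊤ : ℕ∞) φ ∧ (∀ p ∈ P, φ p = ψ p) ∧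
      StrongEquiv P (fderiv ℝ φ) := by
  obtain ⟨T, hT, w, hw⟩ := hUD.exists_isEquivariantPartition hRD
  obtain ⟨R, hR, hdense⟩ := hRD
  obtain ⟨M, hM, hψ⟩ := hFLC.exists_uniform_range hUD hΔ (L := T + (R + 1)) (by positivity)
  have hφ : ∀ a, ‖a‖ < R + 1 → EquivRangeOn P (shiftSet P a) (T + M + (R + 1))
      fun z => interpolate P w ψ z - ψ (z + a) := fun a ha =>
    hw.equivRangeOn_interpolate_sub hUD hψ (by linarith) (by linarith) (by linarith)
  refine ⟨interpolate P w ψ, hw.contDiff_interpolate hUD ψ,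
    fun p hp => hw.interpolate_apply_of_mem ψ hp, T + M + (R + 1) + 1, by positivity, ?_⟩
  exact equivRange_fderiv one_pos fun v hv => equivRange_increment hdense hφ hv (by linarith)

theorem stmt3 {n m : ℕ} (P : Set (Euc n))
    (hUD : UnifDiscrete P) (hRD : RelDense P) (hFLC : FLC P)
    (ψ : Euc n → Euc m)
    (hΔ : ∀ h : Euc n, (∃ p ∈ P, ∃ q ∈ P, h = p - q) →
      StrongEquivOn P (P ∩ shiftSet P h) (fun x => ψ (x + h) - ψ x)) :
    ∃ φ : Euc n → Euc m, ContDiff ℝ (⊤ : ℕ∞) φ ∧ (∀ p ∈ P, φ p = ψ p) ∧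
      StrongEquiv P (fderiv ℝ φ) :=
  stmt3_general P hUD hRD hFLC ψ hΔ
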